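/- There exists a class of languages learnable by a dual strongly monotone behaviorally correct full-information learner from informants but not by any strongly monotone one: [Inf G SMon^d Bc] \ [Inf G SMon Bc] ≠ ∅; in fact the class {ℕ} ∪ {{0,1,…,n} | n ∈ ℕ} witnesses this separation. -/

import Mathlib

open Filter Classical

namespace InfBc

/-! ### Basic notions: r.e. sets, informants, learners -/

/-- The `e`-th recursively enumerable set (via an acceptable numbering of
partial computable functions, `W e = dom φ_e`). -/
def W (e : ℕ) : Set ℕ := {x | ((Denumerable.ofNat Nat.Partrec.Code e).eval x).Dom}

/-- A language is recursively enumerable. -/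
def RE (L : Set ℕ) : Prop := ∃ e, W e = L

abbrev Datum := ℕ × Bool
abbrev Seq := List Datum
abbrev Informant := ℕ → Datum
abbrev HypSeq := ℕ → Part ℕ
/-- Learners are partial functions; all input types are coded into `ℕ`. -/
abbrev Learner := ℕ →. ℕ
abbrev Restriction := HypSeq → Informant → Prop

/-- Positive information of an infinite sequence. -/
def posI (I : Informant) : Set ℕ := {x | ∃ n, I n = (x, true)}
/-- Negative information of an infinite sequence. -/
def negI (I : Informant) : Set ℕ := {x | ∃ n, I n = (x, false)}

/-- `I` is an informant for the language `L`. -/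
def IsInformant (I : Informant) (L : Set ℕ) : Prop := posI I = L ∧ negI I = Lᶜ

/-- `I` is an informant (for some language), i.e. `I ∈ Inf`. -/
def IsInf (I : Informant) : Prop := IsInformant I (posI I)

/-- `I` is a canonical informant. -/
def Canonical (I : Informant) : Prop := ∀ x, I x = (x, true) ∨ I x = (x, false)

/-- `I[n]`, the length-`n` initial segment of `I`. -/
def segment (I : Informant) (n : ℕ) : Seq := (List.range n).map I

/-- Positive information of a finite sequence. -/
def posS (σ : Seq) : Set ℕ := {x | (x, true) ∈ σ}
/-- Negative information of a finite sequence. -/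
def negS (σ : Seq) : Set ℕ := {x | (x, false) ∈ σ}
/-- The content of a finite sequence, as a set. -/
def contentS (σ : Seq) : Set Datum := {a | a ∈ σ}

/-! ### Interaction operators -/

abbrev InteractionOperator := Learner → Informant → HypSeq

/-- Full-information (Gold-style) interaction: `G(h,I)(i) = h(I[i])`. -/
def Gop : InteractionOperator := fun h I i => h (Encodable.encode (segment I i))

/-- Set-driven interaction: `Sd(h,I)(i) = h(content(I[i]))`. -/
def Sdop : InteractionOperator := fun h I i => h (Encodable.encode (segment I i).toFinset)

/-- The iterated evaluation of an iterative learner on a finite sequence: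
start with the initial hypothesis `h(none)` and feed the data one by one. -/
def iterExtend (h : Learner) (σ : Seq) : Part ℕ :=
  σ.foldl (fun pe a => pe.bind fun e => h (Encodable.encode (some (e, a))))
    (h (Encodable.encode (none : Option (ℕ × Datum))))

/-- Iterative interaction: `It(h,I)(i)` is obtained by feeding `I[i]` one datum
at a time, each time updating the previous hypothesis. -/
def Itop : InteractionOperator := fun h I i => iterExtend h (segment I i)

/-- An iterative learner is confluent if the order and multiplicity in which
the content is presented does not matter. -/
def ConfluentLearner (h : Learner) : Prop :=
  ∀ σ τ : Seq, contentS σ = contentS τ → iterExtend h σ = iterExtend h τ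

/-- Confluently iterative interaction. -/
noncomputable def CflItop : InteractionOperator := fun h I i =>
  if ConfluentLearner h then iterExtend h (segment I i) else Part.none

/-- `β ≼ β'`: every (partial computable) `β`-learner can be translated into a
`β'`-learner with the same hypothesis sequence on every informant. -/
def OpLe (β β' : InteractionOperator) : Prop :=
  ∀ h : Learner, Partrec h → ∃ h' : Learner, Partrec h' ∧
    ∀ I : Informant, IsInf I → ∀ n, β h I n = β' h' I n

/-! ### Learning restrictions -/

/-- The trivial restriction `T`. -/
def TT : Restriction := fun _ _ => True

/-- Explanatory identification. -/
def Ex : Restriction := fun p I =>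
  ∃ q, W q = posI I ∧ ∀ᶠ n in atTop, p n = Part.some q

/-- Behaviorally correct identification. -/
def Bc : Restriction := fun p I => ∀ᶠ n in atTop, ∃ e ∈ p n, W e = posI I

/-- Consistency of a hypothesis with a finite sequence of data. -/
def ConsH (e : ℕ) (σ : Seq) : Prop := posS σ ⊆ W e ∧ negS σ ∩ W e = ∅

/-- Consistency of a hypothesis sequence with an informant. -/
def Cons : Restriction := fun p I => ∀ n, ∃ e ∈ p n, ConsH e (segment I n)

/-- Strongly monotone. -/
def SMon : Restriction := fun p _ =>
  ∀ s t, s ≤ t → ∀ e ∈ p s, ∀ e' ∈ p t, W e ⊆ W e'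

/-- Dual strongly monotone. -/
def SMond : Restriction := fun p _ =>
  ∀ s t, s ≤ t → ∀ e ∈ p s, ∀ e' ∈ p t, W e' ⊆ W e

/-- Monotone. -/
def Mon : Restriction := fun p I =>
  ∀ s t, s ≤ t → ∀ e ∈ p s, ∀ e' ∈ p t, W e ∩ posI I ⊆ W e' ∩ posI I

/-- Dual monotone. -/
def Mond : Restriction := fun p I =>
  ∀ s t, s ≤ t → ∀ e ∈ p s, ∀ e' ∈ p t, (W e)ᶜ ∩ negI I ⊆ (W e')ᶜ ∩ negI I

/-- Weakly monotone. -/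
def WMon : Restriction := fun p I =>
  ∀ s t, s ≤ t → ∀ e ∈ p s, ConsH e (segment I t) → ∀ e' ∈ p t, W e ⊆ W e'

/-- Dual weakly monotone. -/
def WMond : Restriction := fun p I =>
  ∀ s t, s ≤ t → ∀ e ∈ p s, ConsH e (segment I t) → ∀ e' ∈ p t, W e' ⊆ W e

/-- Cautious. -/
def Caut : Restriction := fun p _ =>
  ∀ s t, s < t → ∀ e ∈ p s, ∀ e' ∈ p t, ¬ W e' ⊂ W e

/-- Target cautious. -/
def CautTar : Restriction := fun p I =>
  ∀ s, ∀ e ∈ p s, ¬ posI I ⊂ W e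

/-- Finitely cautious. -/
def CautFin : Restriction := fun p _ =>
  ∀ s t, s < t → ∀ e ∈ p s, ∀ e' ∈ p t, W e' ⊂ W e → (W e').Infinite

/-- Infinitely cautious. -/
def CautInf : Restriction := fun p _ =>
  ∀ s t, s < t → ∀ e ∈ p s, ∀ e' ∈ p t, W e' ⊂ W e → (W e').Finite

/-! ### Learnability -/

/-- The class of admissible learners: all partial computable learners. -/
def AllL : Learner → Prop := fun _ => True
/-- The class of admissible learners: total computable learners (`ℛ`). -/
def TotalL : Learner → Prop := fun h => ∀ x, (h x).Dom
/-- Admissible informants: all informants (`Inf`). -/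
def AllI : Informant → Prop := fun _ => True

/-- `h` learns `L` in the setting given by admissible informants `P`,
interaction operator `β` and local restriction `δ`. -/
def LearnsWith (P : Informant → Prop) (β : InteractionOperator) (δ : Restriction)
    (h : Learner) (L : Set ℕ) : Prop :=
  RE L ∧ ∀ I : Informant, P I → IsInformant I L → δ (β h I) I

/-- `[τ(α) C P β δ]`: the collection of all classes of languages learnable by
some learner in `C` that satisfies the global restriction `α` on all admissible
informants, under interaction operator `β` and local restriction `δ`. -/
def Learnable (α : Restriction) (C : Learner → Prop) (P : Informant → Prop)
    (β : InteractionOperator) (δ : Restriction) : Set (Set (Set ℕ)) :=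
  {𝓛 | ∃ h : Learner, Partrec h ∧ C h ∧
        (∀ I : Informant, IsInf I → P I → α (β h I) I) ∧
        ∀ L ∈ 𝓛, LearnsWith P β δ h L}

/-! ### Properties of restrictions -/

/-- A learning restriction is delayable if it is preserved under postponing
hypotheses along a non-decreasing unbounded function. -/
def Delayable (δ : Restriction) : Prop :=
  ∀ I I' : Informant, IsInf I → IsInf I' → Set.range I = Set.range I' →
    ∀ (p : HypSeq) (s : ℕ → ℕ), Monotone s → (∀ m, ∃ n, m ≤ s n) →
      δ p I → (∀ n, contentS (segment I (s n)) ⊆ contentS (segment I' n)) →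
      δ (fun n => p (s n)) I'

/-- A learning restriction is semantic if it is indifferent to replacing the
hypothesis sequence by a semantically equivalent one. -/
def Semantic (δ : Restriction) : Prop :=
  ∀ (p p' : HypSeq) (I : Informant), δ p I →
    (∀ i, (p i).Dom ↔ (p' i).Dom) →
    (∀ i, ∀ e ∈ p i, ∀ e' ∈ p' i, W e = W e') →
    δ p' I


/-- The elements below all negative data of `σ`. -/
def below (σ : Seq) : Set ℕ := {x | ∀ d ∈ σ, d.2 = true ∨ x < d.1}

theorem below_primrec : PrimrecRel fun (σ : Seq) (x : ℕ) => x ∈ below σ := by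
  have h : PrimrecRel fun (d : Datum) (x : ℕ) => d.2 = true ∨ x < d.1 :=
    PrimrecPred.or
      (Primrec.eq.comp (Primrec.snd.comp Primrec.fst) (Primrec.const true))
      (Primrec.nat_lt.comp Primrec.snd (Primrec.fst.comp Primrec.fst))
  exact h.forall_mem_list

/-- A computable learner conjecturing `below σ`. -/
theorem exists_learner : ∃ g : ℕ → ℕ, Computable g ∧
    ∀ σ : Seq, W (g (Encodable.encode σ)) = below σ := by
  let dec : ℕ → Seq := fun n => (Encodable.decode n : Option Seq).getD []
  have hdec : Primrec dec := Primrec.option_getD.comp Primrec.decode (Primrec.const [])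
  have h1 : PrimrecPred fun n : ℕ => n.unpair.2 ∈ below (dec n.unpair.1) :=
    below_primrec.comp (hdec.comp (Primrec.fst.comp Primrec.unpair))
      (Primrec.snd.comp Primrec.unpair)
  have h2 : ComputablePred fun n : ℕ => n.unpair.2 ∈ below (dec n.unpair.1) := by
    obtain ⟨i, hi⟩ := h1
    exact ⟨i, hi.to_comp⟩
  have h3 := Partrec.nat_iff.1 (Partrec.map h2.to_re (Computable.const 0).to₂)
  obtain ⟨c, hc⟩ := Nat.Partrec.Code.exists_code.1 h3
  refine ⟨fun n => Encodable.encode (c.curry n), ?_, ?_⟩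
  · exact (Primrec.encode.comp
      (Nat.Partrec.Code.primrec₂_curry.comp (Primrec.const c) Primrec.id)).to_comp
  · intro σ
    ext x
    simp [W, Nat.Partrec.Code.eval_curry, hc, dec, Part.assert]

theorem mem_segment {I : Informant} {n : ℕ} {d : Datum} :
    d ∈ segment I n ↔ ∃ k < n, I k = d := by
  simp [segment]

theorem below_anti (I : Informant) {s t : ℕ} (h : s ≤ t) :
    below (segment I t) ⊆ below (segment I s) := by
  intro x hx d hd
  obtain ⟨k, hk, rfl⟩ := mem_segment.1 hd
  exact hx _ (mem_segment.2 ⟨k, by omega, rfl⟩)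

theorem positive_part :
    insert Set.univ {L : Set ℕ | ∃ n : ℕ, L = {i | i ≤ n}} ∈
      Learnable TT AllL AllI Gop (fun p I => SMond p I ∧ Bc p I) := by
  obtain ⟨g, hg, hW⟩ := exists_learner
  refine ⟨fun n => Part.some (g n), hg.partrec, trivial, fun _ _ _ => trivial, ?_⟩
  intro L hL
  refine ⟨?_, fun I _ hI => ⟨?_, ?_⟩⟩
  · rcases hL with rfl | ⟨n, rfl⟩
    · exact ⟨_, (hW []).trans (by ext x; simp [below])⟩
    · exact ⟨_, (hW [(n + 1, false)]).trans (by ext x; simp [below, Nat.lt_succ_iff])⟩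
  · intro s t hst e he e' he'
    simp only [Gop, Part.mem_some_iff] at he he'
    subst he he'
    rw [hW, hW]
    exact below_anti I hst
  · obtain ⟨hp, hn⟩ := hI
    -- the conjecture always contains the target language
    have hsub : ∀ m, L ⊆ below (segment I m) := by
      intro m x hx d hd
      obtain ⟨k, _, hk⟩ := mem_segment.1 hd
      obtain ⟨y, b⟩ := d
      cases b with
      | true => exact Or.inl rfl
      | false =>
        right
        have hy : y ∈ negI I := ⟨k, hk⟩
        rw [hn] at hy
        rcases hL with rfl | ⟨n, rfl⟩
        · exact absurd trivial hy
        · simp at hx hy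
          show x < y
          omega
    have key : ∃ N, ∀ m ≥ N, below (segment I m) ⊆ L := by
      rcases hL with rfl | ⟨n, rfl⟩
      · exact ⟨0, fun m _ => Set.subset_univ _⟩
      · have hy : n + 1 ∈ negI I := by rw [hn]; simp
        obtain ⟨k, hk⟩ := hy
        refine ⟨k + 1, fun m hm x hx => ?_⟩
        have := hx _ (mem_segment.2 ⟨k, by omega, hk⟩)
        simp at this
        show x ≤ n
        omega
    obtain ⟨N, hN⟩ := key
    refine eventually_atTop.2 ⟨N, fun m hm => ⟨_, Part.mem_some _, ?_⟩⟩
    rw [hW, hp]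
    exact Set.Subset.antisymm (hN m hm) (hsub m)

theorem negative_part :
    insert Set.univ {L : Set ℕ | ∃ n : ℕ, L = {i | i ≤ n}} ∉
      Learnable TT AllL AllI Gop (fun p I => SMon p I ∧ Bc p I) := by
  rintro ⟨h, _, _, _, hl⟩
  let I : Informant := fun x => (x, true)
  have hI : IsInformant I Set.univ := by
    constructor <;> ext x <;> simp [I, posI, negI]
  obtain ⟨_, hB⟩ := (hl _ (Or.inl rfl)).2 I trivial hI
  obtain ⟨N, hN⟩ := eventually_atTop.1 hB
  obtain ⟨e, he, hWe⟩ := hN N le_rfl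
  let J : Informant := fun x => (x, decide (x ≤ N))
  have hJ : IsInformant J {i | i ≤ N} := by
    constructor <;> ext x <;> simp [J, posI, negI]
  obtain ⟨hS, hB'⟩ := (hl _ (Or.inr ⟨N, rfl⟩)).2 J trivial hJ
  obtain ⟨M, hM⟩ := eventually_atTop.1 hB'
  obtain ⟨e', he', hWe'⟩ := hM (max M N) (le_max_left _ _)
  have hseg : segment J N = segment I N := by
    refine List.map_congr_left fun x hx => ?_
    have := List.mem_range.1 hx
    simp [I, J, this.le]
  have heJ : e ∈ Gop h J N := by
    unfold Gop at he ⊢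
    rwa [hseg]
  have hsub := hS N (max M N) (le_max_right _ _) e heJ e' he'
  rw [hWe, hWe', hI.1, hJ.1] at hsub
  have : N + 1 ≤ N := hsub (Set.mem_univ (N + 1))
  omega

/-- The class `{ℕ} ∪ {{0,…,n} | n ∈ ℕ}` witnesses
`[Inf G SMon^d Bc] \ [Inf G SMon Bc] ≠ ∅`. -/
theorem dual_smon_minus_smon :
    insert Set.univ {L : Set ℕ | ∃ n : ℕ, L = {i | i ≤ n}} ∈
      Learnable TT AllL AllI Gop (fun p I => SMond p I ∧ Bc p I) \
        Learnable TT AllL AllI Gop (fun p I => SMon p I ∧ Bc p I) := by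
  exact ⟨positive_part, negative_part⟩

end InfBc
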